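/- Let (Δ; Ω, ≤) be a homological system over an Artin algebra Λ with height function h, let {1, 2, …, a} be the image of h, and let M ∈ F(Δ). If {0} = W_{a+1} ⊆ W_a ⊆ ⋯ ⊆ W_1 = M and {0} = W'_{a+1} ⊆ W'_a ⊆ ⋯ ⊆ W'_1 = M are two h-filtrations of M, with W_i/W_{i+1} ≅ ⨁_{ω: h(ω)=i} n_ω Δ_ω and W'_i/W'_{i+1} ≅ ⨁_{ω: h(ω)=i} n'_ω Δ_ω, then n_ω = n'_ω for every ω ∈ Ω. -/

import Mathlib

universe u v

open DirectSum

/-- The height function of a finite preordered set `Ω`: `h ω` is `1` plus the length of the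
longest strict chain `ω₀ < ω₁ < ⋯ < ωₙ = ω` ending at `ω` (so minimal elements have height 1). -/
noncomputable def heightFun {Ω : Type v} [Preorder Ω] [Fintype Ω] (ω : Ω) : ℕ :=
  1 + (⨆ (p : LTSeries Ω) (_ : p.last = ω), (p.length : ℕ∞)).toNat

/-- `EverySESSplits Λ A B` says that every short exact sequence of `Λ`-modules
`0 → A → E → B → 0` splits; this is the statement `Ext¹_Λ(B, A) = 0`. -/
def EverySESSplits (Λ : Type u) [Ring Λ] (A B : Type u)
    [AddCommGroup A] [Module Λ A] [AddCommGroup B] [Module Λ B] : Prop :=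
  ∀ (E : Type u) [AddCommGroup E] [Module Λ E] (f : A →ₗ[Λ] E) (g : E →ₗ[Λ] B),
    Function.Injective f → Function.Surjective g → LinearMap.range f = LinearMap.ker g →
      ∃ s : B →ₗ[Λ] E, g.comp s = LinearMap.id

/-- A homological system `(Δ; Ω, ≤)` over the ring `Λ`:
`Ω` is a finite (pre)ordered index set; the `Δ ω` are pairwise nonisomorphic indecomposable
finitely generated `Λ`-modules satisfying (HS3) `Hom (Δ ω, Δ ω') ≠ 0 → ω ≤ ω'` and
(HS4) `Ext¹ (Δ ω, Δ ω') ≠ 0 → ω ≤ ω' ∧ ¬ ω' ≤ ω` (the latter expressed contrapositively via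
splitting of all short exact sequences `0 → Δ ω' → E → Δ ω → 0`). -/
structure IsHomologicalSystem (Λ : Type u) [Ring Λ] {Ω : Type v} [Preorder Ω] [Fintype Ω]
    (Δ : Ω → Type u) [∀ ω, AddCommGroup (Δ ω)] [∀ ω, Module Λ (Δ ω)] : Prop where
  fg : ∀ ω, Module.Finite Λ (Δ ω)
  nontrivial : ∀ ω, Nontrivial (Δ ω)
  indecomposable : ∀ ω (A B : Submodule Λ (Δ ω)), IsCompl A B → A = ⊥ ∨ B = ⊥
  pairwise_nonIso : ∀ ω ω', ω ≠ ω' → IsEmpty (Δ ω ≃ₗ[Λ] Δ ω')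
  hs3 : ∀ ω ω' (f : Δ ω →ₗ[Λ] Δ ω'), f ≠ 0 → ω ≤ ω'
  hs4 : ∀ ω ω', ¬(ω ≤ ω' ∧ ¬ ω' ≤ ω) → EverySESSplits Λ (Δ ω') (Δ ω)

/-- `IsDeltaFiltration Λ Δ t F` says that `⊥ = F 0 ⊊ F 1 ⊊ ⋯ ⊊ F t = ⊤` is a `Δ`-filtration
of `M`, i.e. each factor `F (i+1) / F i` is isomorphic to some `Δ ω`. -/
def IsDeltaFiltration (Λ : Type u) [Ring Λ] {Ω : Type v} [Preorder Ω] [Fintype Ω]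
    (Δ : Ω → Type u) [∀ ω, AddCommGroup (Δ ω)] [∀ ω, Module Λ (Δ ω)]
    {M : Type u} [AddCommGroup M] [Module Λ M]
    (t : ℕ) (F : Fin (t + 1) → Submodule Λ M) : Prop :=
  F 0 = ⊥ ∧ F (Fin.last t) = ⊤ ∧ StrictMono F ∧
    ∀ i : Fin t, ∃ ω : Ω,
      Nonempty ((F i.succ ⧸ (F i.castSucc).comap (F i.succ).subtype) ≃ₗ[Λ] Δ ω)

/-- `M ∈ 𝔉(Δ)`: the `Λ`-module `M` admits a `Δ`-filtration. -/
def MemFiltCat (Λ : Type u) [Ring Λ] {Ω : Type v} [Preorder Ω] [Fintype Ω]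
    (Δ : Ω → Type u) [∀ ω, AddCommGroup (Δ ω)] [∀ ω, Module Λ (Δ ω)]
    (M : Type u) [AddCommGroup M] [Module Λ M] : Prop :=
  ∃ (t : ℕ) (F : Fin (t + 1) → Submodule Λ M), IsDeltaFiltration Λ Δ t F

/-- `ℓ_ω(F)`: the number of factors of the filtration `F` isomorphic to `Δ ω`. -/
noncomputable def ellOmega (Λ : Type u) [Ring Λ] {Ω : Type v} [Preorder Ω] [Fintype Ω]
    (Δ : Ω → Type u) [∀ ω, AddCommGroup (Δ ω)] [∀ ω, Module Λ (Δ ω)]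
    {M : Type u} [AddCommGroup M] [Module Λ M]
    (t : ℕ) (F : Fin (t + 1) → Submodule Λ M) (ω : Ω) : ℕ :=
  Nat.card {i : Fin t //
    Nonempty ((F i.succ ⧸ (F i.castSucc).comap (F i.succ).subtype) ≃ₗ[Λ] Δ ω)}

/-- An `h`-filtration `0 = W (a+1) ⊆ W a ⊆ ⋯ ⊆ W 1 = M` of `M`: the `i`-th layer
`W i / W (i+1)` is a finite direct sum `⨁_{ω : h ω = i} (n ω) • Δ ω` of copies of the `Δ ω`
with `heightFun ω = i`. -/
def IsHFiltration (Λ : Type u) [Ring Λ] {Ω : Type v} [Preorder Ω] [Fintype Ω]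
    (Δ : Ω → Type u) [∀ ω, AddCommGroup (Δ ω)] [∀ ω, Module Λ (Δ ω)]
    {M : Type u} [AddCommGroup M] [Module Λ M]
    (a : ℕ) (W : ℕ → Submodule Λ M) (n : Ω → ℕ) : Prop :=
  W (a + 1) = ⊥ ∧ W 1 = ⊤ ∧ (∀ i, 1 ≤ i → i ≤ a → W (i + 1) ≤ W i) ∧
    ∀ i, 1 ≤ i → i ≤ a →
      Nonempty ((W i ⧸ (W (i + 1)).comap (W i).subtype) ≃ₗ[Λ]
        ⨁ ω : {ω : Ω // heightFun ω = i}, (Fin (n ω.1) → Δ ω.1))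

/-- The trace `tr_L(N)` of `L` in `N`: the sum of the images of all `Λ`-homomorphisms `L → N`. -/
def traceSubmodule (Λ : Type u) [Ring Λ] (L N : Type u)
    [AddCommGroup L] [Module Λ L] [AddCommGroup N] [Module Λ N] : Submodule Λ N :=
  ⨆ f : L →ₗ[Λ] N, LinearMap.range f

/-!
Everything rests on `Hom`-vanishing and on local endomorphism rings. By (HS3), `Hom(Δ ω, Δ ω') = 0`
whenever `h ω' < h ω`, so, climbing the layers of an `h`-filtration `W` from `W (a + 1) = 0`, there
is no nonzero map `W k → Δ ω'` with `h ω' < k`. If `W'` is another `h`-filtration and `W k ≤ W' j`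
with `j < k`, the map `W k → W' j / W' (j + 1)` therefore vanishes and `W k ≤ W' (j + 1)`; hence
`W = W'`.

It remains to compare two decompositions of the same layer, which is Azumaya's form of the
Krull–Schmidt theorem. If `D ^ m` is a retract of `∏ F l`, write each entry of the identity matrix
over `End D` as a sum over `l` of compositions `D → F l → D`. The terms with `F l ≇ D` are nonunits,
so modulo nonunits the `m × m` identity matrix factors through size `#{l | F l ≅ D}`; as `End D`
modulo its nonunits is a division ring, `m ≤ #{l | F l ≅ D}`.
-/

section LocalRing

variable {R : Type*} [Ring R] [IsLocalRing R]

theorem eq_zero_or_eq_one_of_isIdempotentElem {e : R} (he : IsIdempotentElem e) :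
    e = 0 ∨ e = 1 := by
  rcases IsLocalRing.isUnit_or_isUnit_of_add_one (add_sub_cancel e 1) with hu | hu
  · exact Or.inr ((IsIdempotentElem.iff_eq_one_of_isUnit hu).1 he)
  · have : 1 - e = 1 := (IsIdempotentElem.iff_eq_one_of_isUnit hu).1 he.one_sub
    exact Or.inl (sub_eq_self.1 this)

instance instIsDedekindFiniteMonoidOfIsLocalRing : IsDedekindFiniteMonoid R where
  mul_eq_one_symm {a b} hab := by
    have hidem : IsIdempotentElem (b * a) := by
      rw [IsIdempotentElem, mul_assoc, ← mul_assoc a, hab, one_mul]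
    refine (eq_zero_or_eq_one_of_isIdempotentElem hidem).resolve_left fun hba ↦
      one_ne_zero (α := R) ?_
    calc (1 : R) = a * (b * a) * b := by rw [← mul_assoc, hab, one_mul, hab]
      _ = 0 := by rw [hba, mul_zero, zero_mul]

variable (R) in
/-- The nonunits of a (not necessarily commutative) local ring, as a left ideal. It is two-sided,
and the quotient by it is the residue division ring. -/
def nonunitsIdeal : Ideal R where
  __ := IsLocalRing.nonunitsAddSubmonoid R
  smul_mem' _ _ hx hu := hx (isUnit_of_mul_isUnit_right hu)

instance nonunitsIdeal.isTwoSided : (nonunitsIdeal R).IsTwoSided where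
  mul_mem_of_left _ hx hu := hx (isUnit_of_mul_isUnit_left hu)

instance nonunitsIdeal.nontrivial_quotient : Nontrivial (R ⧸ nonunitsIdeal R) :=
  Ideal.Quotient.nontrivial_iff.2 <| (Ideal.ne_top_iff_one _).2 one_notMem_nonunits

noncomputable instance nonunitsIdeal.divisionRingQuotient : DivisionRing (R ⧸ nonunitsIdeal R) :=
  DivisionRing.ofIsUnitOrEqZero fun x ↦ by
    obtain ⟨r, rfl⟩ := Ideal.Quotient.mk_surjective x
    by_cases hr : IsUnit r
    · exact Or.inl (hr.map _)
    · exact Or.inr (Ideal.Quotient.eq_zero_iff_mem.2 hr)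

end LocalRing

section Matrix

variable {m n : Type*} [Fintype m] [Fintype n] [DecidableEq m]

theorem card_le_card_of_matrix_mul_eq_one {S : Type*} [Semiring S] [RankCondition S]
    {A : Matrix m n S} {B : Matrix n m S} (hAB : A * B = 1) :
    Fintype.card m ≤ Fintype.card n := by
  refine card_le_of_surjective S B.vecMulLinear fun y ↦ ⟨Matrix.vecMul y A, ?_⟩
  rw [Matrix.vecMulLinear_apply, Matrix.vecMul_vecMul, hAB, Matrix.vecMul_one]

theorem card_le_card_of_one_sub_mul_mem_nonunits {R : Type*} [Ring R] [IsLocalRing R]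
    {A : Matrix m n R} {B : Matrix n m R}
    (hAB : ∀ i j, (1 - A * B : Matrix m m R) i j ∈ nonunits R) :
    Fintype.card m ≤ Fintype.card n := by
  let π := Ideal.Quotient.mk (nonunitsIdeal R)
  have hπ : (1 - A * B).map π = 0 :=
    Matrix.ext fun i j ↦ Ideal.Quotient.eq_zero_iff_mem.2 (hAB i j)
  refine card_le_card_of_matrix_mul_eq_one (A := A.map π) (B := B.map π) ?_
  have hone : (1 : Matrix m m R).map π = 1 := Matrix.map_one π (map_zero π) (map_one π)
  rw [← Matrix.map_mul, ← hone]
  exact (sub_eq_zero.1 ((Matrix.map_sub π (map_sub π) _ _).symm.trans hπ)).symm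

end Matrix

section KrullSchmidt

variable {Λ : Type*} [Ring Λ]

section Fitting

variable {D : Type*} [AddCommGroup D] [Module Λ D] [IsArtinian Λ D] [IsNoetherian Λ D]

theorem isUnit_or_isNilpotent_end_of_indecomposable
    (hD : ∀ A B : Submodule Λ D, IsCompl A B → A = ⊥ ∨ B = ⊥) (f : Module.End Λ D) :
    IsUnit f ∨ IsNilpotent f := by
  obtain ⟨k, hk⟩ := Filter.eventually_atTop.1 f.eventually_isCompl_ker_pow_range_pow
  refine (hD _ _ (hk (k + 1) k.le_succ)).imp (fun hker ↦ ?_) fun hrange ↦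
    ⟨k + 1, LinearMap.range_eq_bot.1 hrange⟩
  have hinj : Function.Injective (f ^ (k + 1)) := LinearMap.ker_eq_bot.1 hker
  exact isUnit_pow_succ_iff.1 <|
    (Module.End.isUnit_iff _).2 (IsArtinian.bijective_of_injective_endomorphism _ hinj)

theorem isLocalRing_end_of_indecomposable [Nontrivial D]
    (hD : ∀ A B : Submodule Λ D, IsCompl A B → A = ⊥ ∨ B = ⊥) :
    IsLocalRing (Module.End Λ D) :=
  IsLocalRing.of_isUnit_or_isUnit_one_sub_self fun f ↦
    (isUnit_or_isNilpotent_end_of_indecomposable hD f).imp_right IsNilpotent.isUnit_one_sub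

end Fitting

variable {D : Type*} [AddCommGroup D] [Module Λ D]

theorem comp_eq_id_of_comp_eq_id {E : Type*} [AddCommGroup E] [Module Λ E]
    [Nontrivial (Module.End Λ D)] [IsLocalRing (Module.End Λ E)]
    {f : D →ₗ[Λ] E} {g : E →ₗ[Λ] D} (hgf : g ∘ₗ f = LinearMap.id) : f ∘ₗ g = LinearMap.id := by
  have hidem : IsIdempotentElem (f ∘ₗ g : Module.End Λ E) := by
    change (f ∘ₗ g) ∘ₗ (f ∘ₗ g) = f ∘ₗ g
    rw [LinearMap.comp_assoc, ← LinearMap.comp_assoc g, hgf, LinearMap.id_comp]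
  refine (eq_zero_or_eq_one_of_isIdempotentElem hidem).resolve_left fun hfg ↦
    one_ne_zero (α := Module.End Λ D) ?_
  calc LinearMap.id = g ∘ₗ (f ∘ₗ g) ∘ₗ f := by
        rw [LinearMap.comp_assoc, hgf, LinearMap.comp_id, hgf]
    _ = 0 := by rw [hfg, LinearMap.zero_comp, LinearMap.comp_zero]

theorem comp_mem_nonunits_of_isEmpty_linearEquiv {E : Type*} [AddCommGroup E] [Module Λ E]
    [Nontrivial (Module.End Λ D)] [IsLocalRing (Module.End Λ E)] (hDE : IsEmpty (D ≃ₗ[Λ] E))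
    (f : D →ₗ[Λ] E) (g : E →ₗ[Λ] D) : g ∘ₗ f ∈ nonunits (Module.End Λ D) := by
  intro hu
  obtain ⟨v, hv⟩ := hu.exists_left_inv
  have hvgf : (v ∘ₗ g) ∘ₗ f = LinearMap.id := hv
  exact hDE.false (.ofLinearMap f (v ∘ₗ g) (comp_eq_id_of_comp_eq_id hvgf) hvgf)

theorem sum_comp_single_comp_proj_comp {κ : Type*} [Fintype κ] [DecidableEq κ] {F : κ → Type*}
    [∀ l, AddCommGroup (F l)] [∀ l, Module Λ (F l)] {E : Type*} [AddCommGroup E] [Module Λ E]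
    (f : D →ₗ[Λ] ∀ l, F l) (g : (∀ l, F l) →ₗ[Λ] E) :
    ∑ l, (g ∘ₗ LinearMap.single Λ F l) ∘ₗ (LinearMap.proj l ∘ₗ f) = g ∘ₗ f := by
  ext x
  simp only [LinearMap.sum_apply, LinearMap.comp_apply, LinearMap.single_apply,
    LinearMap.proj_apply, ← map_sum, Finset.univ_sum_single]

theorem card_le_card_iso_of_retract [IsLocalRing (Module.End Λ D)]
    {m κ : Type*} [Fintype m] [Finite κ] {F : κ → Type*} [∀ l, AddCommGroup (F l)]
    [∀ l, Module Λ (F l)] [∀ l, IsLocalRing (Module.End Λ (F l))]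
    {f : (m → D) →ₗ[Λ] ∀ l, F l} {g : (∀ l, F l) →ₗ[Λ] m → D} (hgf : g ∘ₗ f = LinearMap.id) :
    Fintype.card m ≤ Nat.card {l // Nonempty (D ≃ₗ[Λ] F l)} := by
  classical
  have := Fintype.ofFinite κ
  let inj (l : κ) (j : m) : D →ₗ[Λ] F l :=
    LinearMap.proj l ∘ₗ f ∘ₗ LinearMap.single Λ (fun _ ↦ D) j
  let pr (l : κ) (i : m) : F l →ₗ[Λ] D := (LinearMap.proj i ∘ₗ g) ∘ₗ LinearMap.single Λ F l
  let ψ (l : {l // Nonempty (D ≃ₗ[Λ] F l)}) : D ≃ₗ[Λ] F l := l.2.some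
  let A : Matrix m {l // Nonempty (D ≃ₗ[Λ] F l)} (Module.End Λ D) :=
    .of fun i l ↦ pr l i ∘ₗ (ψ l).toLinearMap
  let B : Matrix {l // Nonempty (D ≃ₗ[Λ] F l)} m (Module.End Λ D) :=
    .of fun l j ↦ (ψ l).symm.toLinearMap ∘ₗ inj l j
  have hone (i j : m) : (1 : Matrix m m (Module.End Λ D)) i j = ∑ l, pr l i ∘ₗ inj l j := by
    rw [sum_comp_single_comp_proj_comp, LinearMap.comp_assoc, ← LinearMap.comp_assoc _ f, hgf,
      LinearMap.id_comp]
    ext x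
    rw [Matrix.one_apply, LinearMap.comp_apply, LinearMap.proj_apply, LinearMap.single_apply,
      Pi.single_apply]
    split_ifs <;> rfl
  have hmul (i j : m) : (A * B) i j =
      ∑ l : {l // Nonempty (D ≃ₗ[Λ] F l)}, pr l i ∘ₗ inj l j := by
    rw [Matrix.mul_apply]
    refine Finset.sum_congr rfl fun l _ ↦ LinearMap.ext fun x ↦ ?_
    exact congrArg (pr l i) ((ψ l).apply_symm_apply _)
  rw [Nat.card_eq_fintype_card]
  refine card_le_card_of_one_sub_mul_mem_nonunits (A := A) (B := B) fun i j ↦ ?_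
  rw [Matrix.sub_apply, hone, hmul, ← Fintype.sum_subtype_add_sum_subtype
    (fun l ↦ Nonempty (D ≃ₗ[Λ] F l)), add_sub_cancel_left]
  intro hu
  obtain ⟨l, -, hl⟩ := IsLocalRing.exists_of_isUnit_sum hu
  exact comp_mem_nonunits_of_isEmpty_linearEquiv (not_nonempty_iff.1 l.2) _ _ hl

variable {ι : Type*} [Finite ι] {D : ι → Type*} [∀ i, AddCommGroup (D i)] [∀ i, Module Λ (D i)]
  [∀ i, IsLocalRing (Module.End Λ (D i))]

theorem multiplicity_le_of_linearEquiv_directSum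
    (hD : ∀ i j, i ≠ j → IsEmpty (D i ≃ₗ[Λ] D j)) {n n' : ι → ℕ}
    (e : (⨁ i, (Fin (n i) → D i)) ≃ₗ[Λ] ⨁ i, (Fin (n' i) → D i)) (i : ι) : n i ≤ n' i := by
  classical
  have := Fintype.ofFinite ι
  let e' : (⨁ i, (Fin (n i) → D i)) ≃ₗ[Λ] ∀ x : Σ i, Fin (n' i), D x.1 :=
    e ≪≫ₗ DirectSum.linearEquivFunOnFintype Λ ι _ ≪≫ₗ (LinearEquiv.piCurry Λ fun i _ ↦ D i).symm
  have hretract : (DirectSum.component Λ ι _ i ∘ₗ e'.symm.toLinearMap) ∘ₗ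
      (e'.toLinearMap ∘ₗ DirectSum.lof Λ ι (fun i ↦ Fin (n i) → D i) i) = LinearMap.id := by
    refine LinearMap.ext fun x ↦ ?_
    simp only [LinearMap.comp_apply, LinearEquiv.coe_coe, LinearEquiv.symm_apply_apply,
      DirectSum.component.lof_self, LinearMap.id_apply]
  have hiso (x : Σ i, Fin (n' i)) : Nonempty (D i ≃ₗ[Λ] D x.1) ↔ x.1 = i := by
    refine ⟨fun ⟨φ⟩ ↦ ?_, fun hx ↦ hx ▸ ⟨.refl Λ _⟩⟩
    by_contra hne
    exact (hD i x.1 (Ne.symm hne)).false φ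
  calc n i = Fintype.card (Fin (n i)) := (Fintype.card_fin _).symm
    _ ≤ Nat.card {x : Σ i, Fin (n' i) // Nonempty (D i ≃ₗ[Λ] D x.1)} :=
      card_le_card_iso_of_retract hretract
    _ = Nat.card {x : Σ i, Fin (n' i) // x.1 = i} := Nat.card_congr (Equiv.subtypeEquivRight hiso)
    _ = n' i := by rw [Nat.card_congr (Equiv.sigmaSubtype i), Nat.card_fin]

theorem multiplicity_eq_of_linearEquiv_directSum
    (hD : ∀ i j, i ≠ j → IsEmpty (D i ≃ₗ[Λ] D j)) {n n' : ι → ℕ}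
    (e : (⨁ i, (Fin (n i) → D i)) ≃ₗ[Λ] ⨁ i, (Fin (n' i) → D i)) : n = n' :=
  funext fun i ↦ le_antisymm (multiplicity_le_of_linearEquiv_directSum hD e i)
    (multiplicity_le_of_linearEquiv_directSum hD e.symm i)

end KrullSchmidt

section HomVanishing

variable {Λ : Type*} [Ring Λ] {P X : Type*} [AddCommGroup P] [Module Λ P]
  [AddCommGroup X] [Module Λ X] {N K L : Submodule Λ P}

theorem subsingleton_linearMap_of_le (hNK : N ≤ K) [Subsingleton (N →ₗ[Λ] X)]
    [Subsingleton (K ⧸ N.comap K.subtype →ₗ[Λ] X)] : Subsingleton (K →ₗ[Λ] X) :=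
  subsingleton_of_forall_eq 0 fun f ↦ by
    have hker : N.comap K.subtype ≤ LinearMap.ker f := fun x hx ↦
      LinearMap.congr_fun (Subsingleton.elim (f ∘ₗ Submodule.inclusion hNK) 0) ⟨x, hx⟩
    rw [← Submodule.liftQ_mkQ _ f hker, Subsingleton.elim (Submodule.liftQ _ f hker) 0,
      LinearMap.zero_comp]

theorem le_of_subsingleton_linearMap_quotient (hNK : N ≤ K)
    [Subsingleton (N →ₗ[Λ] K ⧸ L.comap K.subtype)] : N ≤ L := by
  intro x hx
  have hzero := LinearMap.congr_fun
    (Subsingleton.elim ((L.comap K.subtype).mkQ ∘ₗ Submodule.inclusion hNK) 0) ⟨x, hx⟩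
  exact (Submodule.Quotient.mk_eq_zero (L.comap K.subtype)).1 hzero

variable {ι : Type*} {κ : ι → Type*} {D : ι → Type*} [∀ i, AddCommGroup (D i)]
  [∀ i, Module Λ (D i)]

theorem subsingleton_linearMap_from_directSum_pi [∀ i, Finite (κ i)]
    [∀ i, Subsingleton (D i →ₗ[Λ] X)] : Subsingleton ((⨁ i, (κ i → D i)) →ₗ[Λ] X) := by
  classical
  exact ⟨fun f g ↦ DirectSum.linearMap_ext _ fun i ↦ LinearMap.pi_ext' fun k ↦
    Subsingleton.elim _ _⟩

theorem subsingleton_linearMap_to_directSum_pi [∀ i, Subsingleton (X →ₗ[Λ] D i)] :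
    Subsingleton (X →ₗ[Λ] ⨁ i, (κ i → D i)) where
  allEq f g := by
    ext x i k
    exact LinearMap.congr_fun (Subsingleton.elim
      (LinearMap.proj k ∘ₗ DirectSum.component Λ ι (fun i ↦ κ i → D i) i ∘ₗ f)
      (LinearMap.proj k ∘ₗ DirectSum.component Λ ι (fun i ↦ κ i → D i) i ∘ₗ g)) x

end HomVanishing

theorem heightFun_mono {Ω : Type*} [Preorder Ω] [Fintype Ω] :
    Monotone (heightFun : Ω → ℕ) := by
  intro ω ω' hle
  have hfin : Order.height ω' ≠ ⊤ := fun htop ↦ by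
    obtain ⟨p, -, hp⟩ := Order.height_eq_top_iff.1 htop (Fintype.card Ω)
    exact p.length_lt_card.ne hp
  rw [heightFun, heightFun, ← Order.height_eq_iSup_last_eq, ← Order.height_eq_iSup_last_eq]
  exact Nat.add_le_add_left (ENat.toNat_le_toNat (Order.height_mono hle) hfin) 1

section HFiltration

variable {Λ : Type u} [Ring Λ] {Ω : Type v} [Preorder Ω] [Fintype Ω]
  {Δ : Ω → Type u} [∀ ω, AddCommGroup (Δ ω)] [∀ ω, Module Λ (Δ ω)]
  {M : Type u} [AddCommGroup M] [Module Λ M] {a : ℕ} {W W' : ℕ → Submodule Λ M} {n n' : Ω → ℕ}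

theorem subsingleton_linearMap_of_heightFun_lt
    (hHom : ∀ ω ω' (f : Δ ω →ₗ[Λ] Δ ω'), f ≠ 0 → ω ≤ ω') {ω ω' : Ω}
    (hlt : heightFun ω' < heightFun ω) : Subsingleton (Δ ω →ₗ[Λ] Δ ω') :=
  subsingleton_of_forall_eq 0 fun f ↦ by
    by_contra hf
    exact hlt.not_ge (heightFun_mono (hHom ω ω' f hf))

namespace IsHFiltration

theorem subsingleton_linearMap
    (hHom : ∀ ω ω' (f : Δ ω →ₗ[Λ] Δ ω'), f ≠ 0 → ω ≤ ω') (hW : IsHFiltration Λ Δ a W n)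
    {ω : Ω} {k : ℕ} (hωk : heightFun ω < k) (hka : k ≤ a + 1) :
    Subsingleton (W k →ₗ[Λ] Δ ω) := by
  obtain ⟨hbot, -, hanti, hlayer⟩ := hW
  induction hka using Nat.decreasingInduction with
  | self =>
    have : Subsingleton (W (a + 1)) := (Submodule.subsingleton_iff_eq_bot).2 hbot
    infer_instance
  | of_succ k hka ih =>
    have hk : 1 ≤ k := Nat.one_le_of_lt hωk
    have hka' : k ≤ a := Nat.lt_succ_iff.1 hka
    obtain ⟨e⟩ := hlayer k hk hka'
    have := ih (Nat.lt_succ_of_lt hωk)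
    have (τ : {τ : Ω // heightFun τ = k}) : Subsingleton (Δ τ →ₗ[Λ] Δ ω) :=
      subsingleton_linearMap_of_heightFun_lt hHom (hωk.trans_eq τ.2.symm)
    have : Subsingleton (W k ⧸ (W (k + 1)).comap (W k).subtype →ₗ[Λ] Δ ω) :=
      (e.arrowCongrAddEquiv (LinearEquiv.refl Λ (Δ ω))).subsingleton_congr.2
        subsingleton_linearMap_from_directSum_pi
    exact subsingleton_linearMap_of_le (hanti k hk hka')

theorem apply_le_apply (hHom : ∀ ω ω' (f : Δ ω →ₗ[Λ] Δ ω'), f ≠ 0 → ω ≤ ω')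
    (hW : IsHFiltration Λ Δ a W n) (hW' : IsHFiltration Λ Δ a W' n') {j k : ℕ} (hj : 1 ≤ j)
    (hjk : j ≤ k) (hka : k ≤ a + 1) : W k ≤ W' j := by
  induction j, hj using Nat.le_induction with
  | base => exact le_top.trans_eq hW'.2.1.symm
  | succ j hj ih =>
    obtain ⟨e⟩ := hW'.2.2.2 j hj (by lia)
    have (τ : {τ : Ω // heightFun τ = j}) : Subsingleton (W k →ₗ[Λ] Δ τ) :=
      hW.subsingleton_linearMap hHom (τ.2.trans_lt hjk) hka
    have := ((LinearEquiv.refl Λ (W k)).arrowCongrAddEquiv e).subsingleton_congr.2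
      subsingleton_linearMap_to_directSum_pi
    exact le_of_subsingleton_linearMap_quotient (ih (Nat.le_of_succ_le hjk))

theorem apply_eq (hHom : ∀ ω ω' (f : Δ ω →ₗ[Λ] Δ ω'), f ≠ 0 → ω ≤ ω')
    (hW : IsHFiltration Λ Δ a W n) (hW' : IsHFiltration Λ Δ a W' n') {k : ℕ} (hk : 1 ≤ k)
    (hka : k ≤ a + 1) : W k = W' k :=
  le_antisymm (hW.apply_le_apply hHom hW' hk le_rfl hka) (hW'.apply_le_apply hHom hW hk le_rfl hka)

end IsHFiltration

end HFiltration

theorem IsHomologicalSystem.isLocalRing_end {Λ : Type u} [Ring Λ] [IsArtinianRing Λ]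
    {Ω : Type v} [Preorder Ω] [Fintype Ω] {Δ : Ω → Type u} [∀ ω, AddCommGroup (Δ ω)]
    [∀ ω, Module Λ (Δ ω)] (hs : IsHomologicalSystem Λ Δ) (ω : Ω) :
    IsLocalRing (Module.End Λ (Δ ω)) :=
  have := hs.fg ω
  have := hs.nontrivial ω
  isLocalRing_end_of_indecomposable (hs.indecomposable ω)

theorem hFiltration_multiplicities_unique_general {Λ : Type u} [Ring Λ]
    {Ω : Type v} [Preorder Ω] [Fintype Ω]
    {Δ : Ω → Type u} [∀ ω, AddCommGroup (Δ ω)] [∀ ω, Module Λ (Δ ω)]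
    (hLocal : ∀ ω, IsLocalRing (Module.End Λ (Δ ω)))
    (hNonIso : ∀ ω ω', ω ≠ ω' → IsEmpty (Δ ω ≃ₗ[Λ] Δ ω'))
    (hHom : ∀ ω ω' (f : Δ ω →ₗ[Λ] Δ ω'), f ≠ 0 → ω ≤ ω')
    {M : Type u} [AddCommGroup M] [Module Λ M] {a : ℕ}
    {W W' : ℕ → Submodule Λ M} {n n' : Ω → ℕ}
    (hW : IsHFiltration Λ Δ a W n) (hW' : IsHFiltration Λ Δ a W' n')
    {ω : Ω} (hω : heightFun ω ≤ a) : n ω = n' ω := by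
  have hpos : 1 ≤ heightFun ω := Nat.le_add_right 1 _
  obtain ⟨e⟩ := hW.2.2.2 _ hpos hω
  obtain ⟨e'⟩ := hW'.2.2.2 _ hpos hω
  rw [← hW.apply_eq hHom hW' hpos (Nat.le_succ_of_le hω),
    ← hW.apply_eq hHom hW' (Nat.le_succ_of_le hpos) (Nat.succ_le_succ hω)] at e'
  have hmult := multiplicity_eq_of_linearEquiv_directSum
    (D := fun τ : {τ : Ω // heightFun τ = heightFun ω} ↦ Δ τ)
    (fun τ τ' hne ↦ hNonIso τ τ' (Subtype.coe_ne_coe.2 hne)) (e.symm ≪≫ₗ e')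
  exact congrFun hmult ⟨ω, rfl⟩

/-- Proposition 8, uniqueness of multiplicities: the coefficients `n ω` of an `h`-filtration
of `M ∈ 𝔉(Δ)` do not depend on the chosen `h`-filtration. -/
theorem hFiltration_multiplicities_unique
    {R : Type u} [CommRing R] [IsArtinianRing R]
    {Λ : Type u} [Ring Λ] [Algebra R Λ] [Module.Finite R Λ]
    {Ω : Type v} [Preorder Ω] [Fintype Ω] [Nonempty Ω]
    (Δ : Ω → Type u) [∀ ω, AddCommGroup (Δ ω)] [∀ ω, Module Λ (Δ ω)]
    (hs : IsHomologicalSystem Λ Δ)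
    (a : ℕ) (hIm : Set.range (fun ω : Ω => heightFun ω) = Set.Icc 1 a)
    (M : Type u) [AddCommGroup M] [Module Λ M] [Module.Finite Λ M]
    (hM : MemFiltCat Λ Δ M)
    (W W' : ℕ → Submodule Λ M) (n n' : Ω → ℕ)
    (hW : IsHFiltration Λ Δ a W n) (hW' : IsHFiltration Λ Δ a W' n') :
    ∀ ω : Ω, n ω = n' ω := by
  have := IsArtinianRing.of_finite R Λ
  exact fun ω ↦ hFiltration_multiplicities_unique_general hs.isLocalRing_end
    hs.pairwise_nonIso hs.hs3 hW hW' (hIm.le ⟨ω, rfl⟩).2
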